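/- Let φ ∈ 𝒮(ℝ^n) and let b be a Lipschitz function on ℝ^n with ∇b ∈ L^∞(ℝ^n). Then for every 1 < p < ∞ and every sequence {f_k}_{k∈ℤ} of measurable functions, ‖(Σ_{k∈ℤ} |∇[b, Φ_k] f_k|²)^{1/2}‖_{L^p(ℝ^n)} ≤ C ‖∇b‖_{L^∞} ‖(Σ_{k∈ℤ} |f_k|²)^{1/2}‖_{L^p(ℝ^n)}. -/

import Mathlib

open MeasureTheory ENNReal NNReal
noncomputable section

/-- `Φ_k g = φ_k ∗ g` where `φ_k(x) = 2^{-kn} φ(2^{-k} x)`. -/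
def schwartzConv (n : ℕ) (φ : SchwartzMap (EuclideanSpace ℝ (Fin n)) ℝ) (k : ℤ)
    (g : EuclideanSpace ℝ (Fin n) → ℝ) (x : EuclideanSpace ℝ (Fin n)) : ℝ :=
  ∫ y, (2:ℝ) ^ (-(k * (n:ℤ))) * φ ((2:ℝ) ^ (-k) • (x - y)) * g y

/-! Differencing the commutator in its base point gives only differences of `b` and of the kernel,
so `‖∇[b, Φ_k] f‖` is at most `C ‖∇b‖_∞` times a positive symmetric operator `T_k` applied to `|f|`,
whose kernel `r ^ (-d) (1 + |x - y| / r) ^ (-(d + 1))`, `r = 2 ^ k`, makes `T_k w ≤ C M w` with `M`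
the Hardy–Littlewood maximal function. It remains to bound `(T_k)_k` on `L^p(ℓ²)`. By
Cauchy–Schwarz `(T_k F)² ≤ C T_k (F²)`, so for `p > 2` one pairs with `w` in the dual of `L^(p/2)`,
moves `T_k` onto `w` and applies the maximal inequality; `p = 2` is Schur's test. For `p < 2`,
Cauchy–Schwarz with the weight `H ^ (1 - p/2)`, `H = ∑ F_k²`, bounds `∑ (T_k F_k)²` by an integrable
function times `C M (H ^ (1 - p/2))`, and Hölder concludes. -/

theorem mul_rpow_neg_le_rpow_one_sub {c : ℝ≥0∞} (hc : c ≠ ∞) (a : ℝ) :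
    c * c ^ (-a) ≤ c ^ (1 - a) := by
  rcases eq_or_ne c 0 with rfl | hc0
  · simp
  · rw [sub_eq_add_neg, ENNReal.rpow_add _ _ hc0 hc, ENNReal.rpow_one]

section Lp

variable {α : Type*} [MeasurableSpace α] {μ : Measure α}

theorem lintegral_Ioi_zero_ofReal_rpow_eq_top (s : ℝ) :
    ∫⁻ t in Set.Ioi (0 : ℝ), ENNReal.ofReal (t ^ s) = ∞ := by
  by_contra h
  refine not_integrableOn_Ioi_rpow s ((lintegral_ofReal_ne_top_iff_integrable
    (by fun_prop) ?_).1 h)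
  filter_upwards [ae_restrict_mem measurableSet_Ioi] with t ht
  exact Real.rpow_nonneg (le_of_lt ht) s

theorem ae_ne_top_of_lintegral_rpow_ne_top {g : α → ℝ≥0∞} (hg : AEMeasurable g μ) {q : ℝ}
    (hq : 0 < q) (h : ∫⁻ x, g x ^ q ∂μ ≠ ∞) : ∀ᵐ x ∂μ, g x ≠ ∞ := by
  filter_upwards [ae_lt_top' (hg.pow_const q) h] with x hx htop
  simp [htop, hq] at hx

theorem lintegral_rpow_eq_lintegral_meas_ofReal_lt_mul {g : α → ℝ≥0∞} (hg : AEMeasurable g μ)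
    {q : ℝ} (hq : 0 < q) :
    ∫⁻ x, g x ^ q ∂μ = ENNReal.ofReal q *
      ∫⁻ t in Set.Ioi (0 : ℝ), μ {x | ENNReal.ofReal t < g x} * ENNReal.ofReal (t ^ (q - 1)) := by
  by_cases hfin : ∀ᵐ x ∂μ, g x ≠ ∞
  · have hlevel : ∀ t ∈ Set.Ioi (0 : ℝ),
        μ {x | t < (g x).toReal} * ENNReal.ofReal (t ^ (q - 1)) =
          μ {x | ENNReal.ofReal t < g x} * ENNReal.ofReal (t ^ (q - 1)) := by
      intro t ht
      congr 1
      refine measure_congr ?_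
      filter_upwards [hfin] with x hx
      exact propext (ENNReal.ofReal_lt_iff_lt_toReal (le_of_lt ht) hx).symm
    rw [← setLIntegral_congr_fun measurableSet_Ioi hlevel,
      ← lintegral_rpow_eq_lintegral_meas_lt_mul μ (.of_forall fun _ => toReal_nonneg)
        hg.ennreal_toReal hq]
    refine lintegral_congr_ae ?_
    filter_upwards [hfin] with x hx
    rw [← ENNReal.ofReal_rpow_of_nonneg toReal_nonneg hq.le, ENNReal.ofReal_toReal hx]
  · have hleft : ∫⁻ x, g x ^ q ∂μ = ∞ :=
      not_imp_comm.1 (ae_ne_top_of_lintegral_rpow_ne_top hg hq) hfin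
    have htop : μ {x | g x = ∞} ≠ 0 := by simpa only [ae_iff, not_not] using hfin
    have hright : ∞ ≤
        ∫⁻ t in Set.Ioi (0 : ℝ), μ {x | ENNReal.ofReal t < g x} * ENNReal.ofReal (t ^ (q - 1)) :=
      calc ∞ = ∫⁻ t in Set.Ioi (0 : ℝ), μ {x | g x = ∞} * ENNReal.ofReal (t ^ (q - 1)) := by
            rw [lintegral_const_mul _ (by fun_prop), lintegral_Ioi_zero_ofReal_rpow_eq_top,
              ENNReal.mul_top htop]
        _ ≤ _ := by
            gcongr with t x
            rintro hx
            simp [hx]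
    rw [hleft, top_le_iff.1 hright, ENNReal.mul_top (by simpa using hq)]

theorem lintegral_rpow_le_of_mul_meas_lt_le {g w : α → ℝ≥0∞} (hg : AEMeasurable g μ)
    (hw : Measurable w) {A : ℝ≥0∞} (hA : A ≠ ∞)
    (h : ∀ t : ℝ, 0 < t → ENNReal.ofReal t * μ {x | ENNReal.ofReal t < g x} ≤
      A * ∫⁻ x in {x | ENNReal.ofReal t < w x}, w x ∂μ)
    {q : ℝ} (hq : 1 < q) :
    ∫⁻ x, g x ^ q ∂μ ≤
      ENNReal.ofReal q * A * (ENNReal.ofReal (q - 1))⁻¹ * ∫⁻ x, w x ^ q ∂μ := by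
  have hq0 : ENNReal.ofReal (q - 1) ≠ 0 := by simpa using hq
  have hlevel : ∀ t ∈ Set.Ioi (0 : ℝ),
      μ {x | ENNReal.ofReal t < g x} * ENNReal.ofReal (t ^ (q - 1)) ≤
        A * (μ.withDensity w {x | ENNReal.ofReal t < w x} * ENNReal.ofReal (t ^ (q - 1 - 1))) := by
    intro t (ht : 0 < t)
    have hpow : ENNReal.ofReal (t ^ (q - 1)) =
        ENNReal.ofReal t * ENNReal.ofReal (t ^ (q - 1 - 1)) := by
      rw [← ENNReal.ofReal_mul ht.le, Real.rpow_sub_one ht.ne' (q - 1),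
        mul_div_cancel₀ _ ht.ne']
    rw [withDensity_apply _ (measurableSet_lt measurable_const hw), hpow, ← mul_assoc, ← mul_assoc,
      mul_comm (μ _)]
    exact mul_le_mul_left (h t ht) _
  have hweight : ∫⁻ x, w x ^ (q - 1) ∂μ.withDensity w = ∫⁻ x, w x ^ q ∂μ := by
    rw [lintegral_withDensity_eq_lintegral_mul μ hw (hw.pow_const _)]
    refine lintegral_congr fun x => ?_
    conv_rhs => rw [← add_sub_cancel 1 q, ENNReal.rpow_add_of_nonneg _ _ zero_le_one
      (sub_nonneg.2 hq.le), ENNReal.rpow_one]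
    rfl
  calc ∫⁻ x, g x ^ q ∂μ
      = ENNReal.ofReal q * ∫⁻ t in Set.Ioi (0 : ℝ),
          μ {x | ENNReal.ofReal t < g x} * ENNReal.ofReal (t ^ (q - 1)) :=
        lintegral_rpow_eq_lintegral_meas_ofReal_lt_mul hg (by linarith)
    _ ≤ ENNReal.ofReal q * (A * ∫⁻ t in Set.Ioi (0 : ℝ),
          μ.withDensity w {x | ENNReal.ofReal t < w x} * ENNReal.ofReal (t ^ (q - 1 - 1))) := by
        rw [← lintegral_const_mul' A _ hA]
        exact mul_le_mul_right (setLIntegral_mono' measurableSet_Ioi hlevel) _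
    _ = ENNReal.ofReal q * A * (ENNReal.ofReal (q - 1))⁻¹ *
          ∫⁻ x, w x ^ (q - 1) ∂μ.withDensity w := by
        rw [lintegral_rpow_eq_lintegral_meas_ofReal_lt_mul hw.aemeasurable (sub_pos.2 hq),
          ← mul_assoc (_ * A * _), mul_assoc (_ * A), ENNReal.inv_mul_cancel hq0 ofReal_ne_top,
          mul_one, mul_assoc]
    _ = _ := by rw [hweight]

theorem exists_simpleFunc_le_lintegral_lt_top_of_lt_lintegral [SigmaFinite μ] {G : α → ℝ≥0∞}
    {c : ℝ≥0∞} (hc : c < ∫⁻ x, G x ∂μ) :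
    ∃ u : SimpleFunc α ℝ≥0, (∀ x, (u x : ℝ≥0∞) ≤ G x) ∧ ∫⁻ x, u x ∂μ < ∞ ∧ c < ∫⁻ x, u x ∂μ := by
  rw [lintegral_eq_nnreal] at hc
  simp only [lt_iSup_iff, ← SimpleFunc.lintegral_eq_lintegral] at hc
  obtain ⟨v, hvG, hcv⟩ := hc
  obtain ⟨u, huv, hu, hcu⟩ := SimpleFunc.exists_lt_lintegral_simpleFunc_of_lt_lintegral
    (f := v) hcv
  exact ⟨u, fun x => (ENNReal.coe_le_coe.2 (huv x)).trans (hvG x), hu, hcu⟩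

theorem lintegral_rpow_le_of_forall_lintegral_mul_le [SigmaFinite μ] {r r' : ℝ}
    (hr : r.HolderConjugate r') {G : α → ℝ≥0∞} {B : ℝ≥0∞}
    (h : ∀ w : α → ℝ≥0∞, Measurable w → ∫⁻ x, G x * w x ∂μ ≤ B * (∫⁻ x, w x ^ r' ∂μ) ^ (1 / r')) :
    ∫⁻ x, G x ^ r ∂μ ≤ B ^ r := by
  by_contra! hlt
  obtain ⟨u, huG, hu, hBu⟩ := exists_simpleFunc_le_lintegral_lt_top_of_lt_lintegral hlt
  set I := ∫⁻ x, u x ∂μ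
  have hI0 : I ≠ 0 := (zero_le.trans_lt hBu).ne'
  have hr0 := hr.pos
  have hr0' := hr.symm.pos
  have hsplit (a : ℝ≥0∞) : a ^ (1 / r) * a ^ (1 / r') = a := by
    rw [← ENNReal.rpow_add_of_nonneg _ _ (by positivity) (by positivity), one_div, one_div,
      hr.inv_add_inv_eq_one, ENNReal.rpow_one]
  have htest : I ≤ B * I ^ (1 / r') :=
    calc I = ∫⁻ x, (u x : ℝ≥0∞) ^ (1 / r) * (u x : ℝ≥0∞) ^ (1 / r') ∂μ := by simp only [hsplit]; rfl
      _ ≤ ∫⁻ x, G x * (u x : ℝ≥0∞) ^ (1 / r') ∂μ := by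
          gcongr with x
          rw [one_div, ENNReal.rpow_inv_le_iff hr0]
          exact huG x
      _ ≤ B * (∫⁻ x, ((u x : ℝ≥0∞) ^ (1 / r')) ^ r' ∂μ) ^ (1 / r') := h _ (by fun_prop)
      _ = B * I ^ (1 / r') := by
          simp only [one_div, ENNReal.rpow_inv_rpow hr0'.ne']
          rfl
  have hroot : I ^ (1 / r) ≤ B := by
    refine (ENNReal.mul_le_mul_iff_left (c := I ^ (1 / r')) (by simp [hI0, hu.ne])
      (ENNReal.rpow_ne_top_of_nonneg (by positivity) hu.ne)).1 ?_
    rwa [hsplit]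
  rw [one_div, ENNReal.rpow_inv_le_iff hr0] at hroot
  exact hBu.not_ge hroot

theorem lintegral_tsum_sq_rpow_le_of_le_const_mul {ι : Type*} {F G : ι → α → ℝ≥0∞}
    {c : ℝ≥0∞} (hc : c ≠ ∞) (hFG : ∀ i x, F i x ≤ c * G i x) {p : ℝ} (hp : 0 < p) :
    (∫⁻ x, (∑' i, F i x ^ 2) ^ (p / 2) ∂μ) ^ (1 / p) ≤
      c * (∫⁻ x, (∑' i, G i x ^ 2) ^ (p / 2) ∂μ) ^ (1 / p) := by
  have hcp : c ^ p = (c ^ 2) ^ (p / 2) := by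
    rw [← ENNReal.rpow_natCast_mul, Nat.cast_ofNat, mul_div_cancel₀ p two_ne_zero]
  have hpow : ∫⁻ x, (∑' i, F i x ^ 2) ^ (p / 2) ∂μ ≤
      c ^ p * ∫⁻ x, (∑' i, G i x ^ 2) ^ (p / 2) ∂μ := by
    rw [← lintegral_const_mul' _ _ (ENNReal.rpow_ne_top_of_nonneg hp.le hc)]
    refine lintegral_mono fun x => ?_
    rw [hcp, ← ENNReal.mul_rpow_of_nonneg _ _ (by positivity), ← ENNReal.tsum_mul_left]
    gcongr with i
    rw [← mul_pow]
    gcongr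
    exact hFG i x
  calc (∫⁻ x, (∑' i, F i x ^ 2) ^ (p / 2) ∂μ) ^ (1 / p)
      ≤ (c ^ p * ∫⁻ x, (∑' i, G i x ^ 2) ^ (p / 2) ∂μ) ^ (1 / p) := by gcongr
    _ = c * (∫⁻ x, (∑' i, G i x ^ 2) ^ (p / 2) ∂μ) ^ (1 / p) := by
      rw [ENNReal.mul_rpow_of_nonneg _ _ (by positivity), ← ENNReal.rpow_mul,
        mul_one_div_cancel hp.ne', ENNReal.rpow_one]

end Lp

section MaximalFunction

open Metric Set Module

variable {E : Type*} [NormedAddCommGroup E] [MeasurableSpace E]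

/-- The centred Hardy–Littlewood maximal function of `w`. Averaging over open balls makes it lower
semicontinuous, hence measurable, for every `w`. -/
def hardyLittlewoodMaximal (μ : Measure E) (w : E → ℝ≥0∞) (x : E) : ℝ≥0∞ :=
  ⨆ (r : ℝ) (_ : 0 < r), ⨍⁻ y in ball x r, w y ∂μ

variable {μ : Measure E}

theorem setLAverage_ball_le_hardyLittlewoodMaximal (w : E → ℝ≥0∞) (x : E) {r : ℝ} (hr : 0 < r) :
    ⨍⁻ y in ball x r, w y ∂μ ≤ hardyLittlewoodMaximal μ w x :=
  le_iSup₂ (f := fun r (_ : 0 < r) => ⨍⁻ y in ball x r, w y ∂μ) r hr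

theorem hardyLittlewoodMaximal_one_le (x : E) : hardyLittlewoodMaximal μ 1 x ≤ 1 := by
  refine iSup₂_le fun r _ => ?_
  rw [setLAverage_eq, Pi.one_def, setLIntegral_one]
  exact ENNReal.div_self_le_one

theorem lowerSemicontinuous_setLIntegral_ball (w : E → ℝ≥0∞) (r : ℝ) :
    LowerSemicontinuous fun x => ∫⁻ y in ball x r, w y ∂μ := by
  intro x t (ht : t < ∫⁻ y in ball x r, w y ∂μ)
  have hball : ball x r = ⋃ n : ℕ, ball x (r - 1 / (n + 1)) := by
    refine Subset.antisymm (fun y hy => ?_)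
      (iUnion_subset fun n => ball_subset_ball (sub_le_self r Nat.one_div_pos_of_nat.le))
    obtain ⟨n, hn⟩ := exists_nat_one_div_lt (sub_pos.2 (mem_ball.1 hy))
    exact mem_iUnion.2 ⟨n, mem_ball.2 (by linarith)⟩
  have hmono : Monotone fun n : ℕ => ball x (r - 1 / (n + 1)) := fun m n hmn =>
    ball_subset_ball (sub_le_sub_left (Nat.one_div_le_one_div hmn) r)
  rw [hball, setLIntegral_iUnion_of_directed _ hmono.directed_le, lt_iSup_iff] at ht
  obtain ⟨n, hn⟩ := ht
  filter_upwards [ball_mem_nhds x (Nat.one_div_pos_of_nat (α := ℝ) (n := n))] with z hz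
  refine hn.trans_le (lintegral_mono_set (ball_subset_ball' ?_))
  rw [dist_comm]
  linarith [mem_ball.1 hz]

variable [μ.IsAddHaarMeasure]

theorem measurable_hardyLittlewoodMaximal [BorelSpace E] (w : E → ℝ≥0∞) :
    Measurable (hardyLittlewoodMaximal μ w) := by
  refine (lowerSemicontinuous_biSup fun r hr => ?_).measurable
  simp only [setLAverage_eq, div_eq_mul_inv, μ.addHaar_ball_center]
  refine Continuous.comp_lowerSemicontinuous (ENNReal.continuous_mul_const ?_)
    (lowerSemicontinuous_setLIntegral_ball w r) fun _ _ h => mul_le_mul_left h _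
  exact ENNReal.inv_ne_top.2 (measure_ball_pos μ 0 hr).ne'

variable [NormedSpace ℝ E] [FiniteDimensional ℝ E]

theorem hardyLittlewoodMaximal_le_indicator_add {w : E → ℝ≥0∞} (t : ℝ≥0∞) (x : E) :
    hardyLittlewoodMaximal μ w x ≤
      hardyLittlewoodMaximal μ ({y | t < w y}.indicator w) x + t := by
  refine iSup₂_le fun r hr => ?_
  have hsplit (y : E) : w y ≤ {y | t < w y}.indicator w y + t := by
    by_cases hy : t < w y
    · simp [hy]
    · simpa [hy] using not_lt.1 hy
  calc ⨍⁻ y in ball x r, w y ∂μ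
      ≤ ⨍⁻ y in ball x r, ({y | t < w y}.indicator w y + t) ∂μ :=
        laverage_mono_ae (.of_forall hsplit)
    _ = ⨍⁻ y in ball x r, {y | t < w y}.indicator w y ∂μ + t := by
        have hconst : ⨍⁻ _ in ball x r, t ∂μ = t :=
          setLAverage_const (measure_ball_pos μ x hr).ne' measure_ball_lt_top.ne t
        rw [setLAverage_eq] at hconst
        rw [setLAverage_eq, setLAverage_eq, lintegral_add_right _ measurable_const,
          ENNReal.add_div, hconst]
    _ ≤ _ := by
        gcongr
        exact setLAverage_ball_le_hardyLittlewoodMaximal _ x hr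

variable [BorelSpace E]

theorem addHaar_closedBall_five_mul (x : E) {r : ℝ} (hr : 0 < r) :
    μ (closedBall x (5 * r)) = 5 ^ finrank ℝ E * μ (ball x r) := by
  rw [μ.addHaar_closedBall x (by positivity), μ.addHaar_ball_of_pos x hr, mul_pow,
    ENNReal.ofReal_mul (by positivity), ENNReal.ofReal_pow (by norm_num), ofReal_ofNat, mul_assoc]

theorem mul_measure_le_of_forall_mul_measure_ball_le {S : Set E} {ρ : E → ℝ} {R : ℝ}
    (hρ : ∀ x ∈ S, 0 < ρ x) (hρR : ∀ x ∈ S, ρ x ≤ R) {t : ℝ≥0∞} {w : E → ℝ≥0∞}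
    (h : ∀ x ∈ S, t * μ (ball x (ρ x)) ≤ ∫⁻ y in ball x (ρ x), w y ∂μ) :
    t * μ S ≤ 5 ^ finrank ℝ E * ∫⁻ y, w y ∂μ := by
  obtain ⟨u, huS, hdisj, hcover⟩ :=
    Vitali.exists_disjoint_subfamily_covering_enlargement_closedBall S id ρ R hρR 5 (by norm_num)
  have hdisj' : u.PairwiseDisjoint fun a => ball a (ρ a) :=
    hdisj.mono_on fun a _ => ball_subset_closedBall
  have hcount : u.Countable := hdisj'.countable_of_isOpen (fun a _ => isOpen_ball)
    fun a ha => nonempty_ball.2 (hρ a (huS ha))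
  have hsub : S ⊆ ⋃ a ∈ u, closedBall a (5 * ρ a) := fun x hx =>
    let ⟨a, ha, hxa⟩ := hcover x hx
    mem_biUnion ha (hxa (mem_closedBall_self (hρ x hx).le))
  calc t * μ S ≤ t * ∑' a : u, μ (closedBall (a : E) (5 * ρ a)) := by
        gcongr
        exact (measure_mono hsub).trans (measure_biUnion_le _ hcount _)
    _ = 5 ^ finrank ℝ E * ∑' a : u, t * μ (ball (a : E) (ρ a)) := by
        simp only [addHaar_closedBall_five_mul _ (hρ _ (huS (Subtype.coe_prop _))),
          ← ENNReal.tsum_mul_left, mul_left_comm]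
    _ ≤ 5 ^ finrank ℝ E * ∑' a : u, ∫⁻ y in ball (a : E) (ρ a), w y ∂μ := by
        gcongr with a
        exact h a (huS a.2)
    _ = 5 ^ finrank ℝ E * ∫⁻ y in ⋃ a ∈ u, ball a (ρ a), w y ∂μ := by
        rw [lintegral_biUnion hcount (fun a _ => measurableSet_ball) hdisj']
    _ ≤ 5 ^ finrank ℝ E * ∫⁻ y, w y ∂μ := by
        gcongr
        exact Measure.restrict_le_self

theorem mul_measure_lt_hardyLittlewoodMaximal_le (w : E → ℝ≥0∞) (t : ℝ≥0∞) :
    t * μ {x | t < hardyLittlewoodMaximal μ w x} ≤ 5 ^ finrank ℝ E * ∫⁻ y, w y ∂μ := by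
  -- Vitali's covering lemma needs bounded radii, so the level set is exhausted by truncations.
  set S : ℕ → Set E := fun N => {x | ∃ r : ℝ, 0 < r ∧ r ≤ N ∧ t < ⨍⁻ y in ball x r, w y ∂μ} with hS
  have hmono : Monotone S := fun N N' hN x ⟨r, hr, hrN, ht⟩ =>
    ⟨r, hr, hrN.trans (by exact_mod_cast hN), ht⟩
  have hunion : {x | t < hardyLittlewoodMaximal μ w x} = ⋃ N, S N := by
    ext x
    simp only [hardyLittlewoodMaximal, lt_iSup_iff, mem_ofPred_eq, mem_iUnion, hS]
    refine ⟨fun ⟨r, hr, ht⟩ => ?_, fun ⟨_, r, hr, _, ht⟩ => ⟨r, hr, ht⟩⟩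
    obtain ⟨N, hN⟩ := exists_nat_ge r
    exact ⟨N, r, hr, hN, ht⟩
  rw [hunion, hmono.measure_iUnion, ENNReal.mul_iSup]
  refine iSup_le fun N => ?_
  choose! ρ hρ hρN hlt using fun x (hx : x ∈ S N) => hx
  refine mul_measure_le_of_forall_mul_measure_ball_le hρ hρN fun x hx => ?_
  have hlt := hlt x hx
  rw [setLAverage_eq] at hlt
  exact mul_le_of_le_div hlt.le

theorem mul_measure_two_mul_lt_hardyLittlewoodMaximal_le {w : E → ℝ≥0∞} (hw : Measurable w)
    (t : ℝ≥0∞) :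
    t * μ {x | 2 * t < hardyLittlewoodMaximal μ w x} ≤
      5 ^ finrank ℝ E * ∫⁻ y in {y | t < w y}, w y ∂μ := by
  rw [← lintegral_indicator (measurableSet_lt measurable_const hw)]
  refine le_trans (mul_le_mul_right (measure_mono fun x hx => ?_) t)
    (mul_measure_lt_hardyLittlewoodMaximal_le _ t)
  have hlt := hx.trans_le (hardyLittlewoodMaximal_le_indicator_add t x)
  rw [two_mul] at hlt
  exact lt_of_add_lt_add_right hlt

theorem exists_lintegral_hardyLittlewoodMaximal_rpow_le (μ : Measure E) [μ.IsAddHaarMeasure] {q : ℝ}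
    (hq : 1 < q) : ∃ C : ℝ≥0, ∀ w : E → ℝ≥0∞, Measurable w →
      ∫⁻ x, hardyLittlewoodMaximal μ w x ^ q ∂μ ≤ C * ∫⁻ x, w x ^ q ∂μ := by
  set C := (2 : ℝ≥0∞) ^ q *
    (ENNReal.ofReal q * 5 ^ finrank ℝ E * (ENNReal.ofReal (q - 1))⁻¹) with hC
  have hCtop : C ≠ ∞ := by
    have h2 : (2 : ℝ≥0∞) ^ q ≠ ∞ := ENNReal.rpow_ne_top_of_nonneg (by linarith) ofNat_ne_top
    have hq0 : ENNReal.ofReal (q - 1) ≠ 0 := by simpa using hq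
    finiteness
  refine ⟨C.toNNReal, fun w hw => ?_⟩
  have hM := measurable_hardyLittlewoodMaximal (μ := μ) w
  have hweak : ∀ t : ℝ, 0 < t → ENNReal.ofReal t *
      μ {x | ENNReal.ofReal t < hardyLittlewoodMaximal μ w x / 2} ≤
        5 ^ finrank ℝ E * ∫⁻ y in {y | ENNReal.ofReal t < w y}, w y ∂μ := by
    intro t _
    simp only [ENNReal.lt_div_iff_mul_lt (.inl two_ne_zero) (.inl ofNat_ne_top),
      mul_comm _ (2 : ℝ≥0∞)]
    exact mul_measure_two_mul_lt_hardyLittlewoodMaximal_le hw _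
  calc ∫⁻ x, hardyLittlewoodMaximal μ w x ^ q ∂μ
      = 2 ^ q * ∫⁻ x, (hardyLittlewoodMaximal μ w x / 2) ^ q ∂μ := by
        rw [← lintegral_const_mul _ (by fun_prop)]
        simp only [← ENNReal.mul_rpow_of_nonneg _ _ (zero_le_one.trans hq.le),
          ENNReal.mul_div_cancel two_ne_zero ofNat_ne_top]
    _ ≤ C * ∫⁻ x, w x ^ q ∂μ := by
        rw [hC, mul_assoc]
        gcongr
        exact lintegral_rpow_le_of_mul_meas_lt_le (hM.div_const 2).aemeasurable hw
          (by finiteness) hweak hq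
    _ = _ := by rw [ENNReal.coe_toNNReal hCtop]

end MaximalFunction

section KernelOperator

variable {α : Type*} [MeasurableSpace α] {μ : Measure α}

/-- The positive integral operator `w ↦ ∫ K(·, y) w(y) dμ(y)`. -/
def kernelOp (μ : Measure α) (K : α → α → ℝ≥0∞) (w : α → ℝ≥0∞) (x : α) : ℝ≥0∞ :=
  ∫⁻ y, K x y * w y ∂μ

/-- A measurable symmetric kernel all of whose marginals have mass at most `A`. -/
structure IsSymmKernel (μ : Measure α) (K : α → α → ℝ≥0∞) (A : ℝ≥0∞) : Prop where
  measurable : Measurable (Function.uncurry K)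
  symm : ∀ x y, K x y = K y x
  mass_le : ∀ x, ∫⁻ y, K x y ∂μ ≤ A

section Single

variable {K : α → α → ℝ≥0∞} {A : ℝ≥0∞}

theorem IsSymmKernel.measurable_kernelOp [SFinite μ] (hK : IsSymmKernel μ K A) {w : α → ℝ≥0∞}
    (hw : Measurable w) : Measurable (kernelOp μ K w) :=
  (hK.measurable.mul (hw.comp measurable_snd)).lintegral_prod_right'

theorem IsSymmKernel.lintegral_kernelOp_mul [SFinite μ] (hK : IsSymmKernel μ K A) {w g : α → ℝ≥0∞}
    (hw : Measurable w) (hg : Measurable g) :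
    ∫⁻ x, kernelOp μ K w x * g x ∂μ = ∫⁻ x, w x * kernelOp μ K g x ∂μ := by
  have hKx (x : α) : Measurable (K x) := hK.measurable.of_uncurry_left
  calc ∫⁻ x, kernelOp μ K w x * g x ∂μ = ∫⁻ x, ∫⁻ y, K x y * w y * g x ∂μ ∂μ :=
        lintegral_congr fun x => (lintegral_mul_const _ ((hKx x).mul hw)).symm
    _ = ∫⁻ y, ∫⁻ x, K x y * w y * g x ∂μ ∂μ :=
        lintegral_lintegral_swap ((hK.measurable.mul (hw.comp measurable_snd)).mul
          (hg.comp measurable_fst)).aemeasurable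
    _ = ∫⁻ y, w y * kernelOp μ K g y ∂μ := by
        refine lintegral_congr fun y => ?_
        have hKg : Measurable fun x => K y x * g x := (hKx y).mul hg
        rw [kernelOp, ← lintegral_const_mul _ hKg]
        refine lintegral_congr fun x => ?_
        rw [hK.symm x y]
        ring

theorem IsSymmKernel.lintegral_kernelOp_le [SFinite μ] (hK : IsSymmKernel μ K A) {w : α → ℝ≥0∞}
    (hw : Measurable w) : ∫⁻ x, kernelOp μ K w x ∂μ ≤ A * ∫⁻ x, w x ∂μ := by
  have hdual := hK.lintegral_kernelOp_mul hw measurable_one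
  simp only [Pi.one_apply, mul_one, kernelOp] at hdual
  rw [← lintegral_const_mul _ hw]
  simp only [kernelOp, hdual, mul_comm A]
  gcongr with x
  exact hK.mass_le x

theorem IsSymmKernel.kernelOp_mul_sq_le (hK : IsSymmKernel μ K A) {f g : α → ℝ≥0∞}
    (hf : Measurable f) (hg : Measurable g) (x : α) :
    kernelOp μ K (fun y => f y * g y) x ^ 2 ≤
      kernelOp μ K (fun y => f y ^ 2) x * kernelOp μ K (fun y => g y ^ 2) x := by
  have hKx : Measurable (K x) := hK.measurable.of_uncurry_left
  have hroot_sq (a : ℝ≥0∞) : (a ^ (1 / 2 : ℝ)) ^ 2 = a := by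
    rw [← ENNReal.rpow_natCast, ← ENNReal.rpow_mul]
    norm_num
  have hsq_root (a : ℝ≥0∞) : (a ^ 2) ^ (1 / 2 : ℝ) = a := by
    rw [← ENNReal.rpow_natCast, ← ENNReal.rpow_mul]
    norm_num
  have hintegrand (y : α) :
      (K x y * f y ^ 2) ^ (1 / 2 : ℝ) * (K x y * g y ^ 2) ^ (1 / 2 : ℝ) =
        K x y * (f y * g y) := by
    rw [← ENNReal.mul_rpow_of_nonneg _ _ (by norm_num), ← hsq_root (K x y * (f y * g y))]
    congr 1
    ring
  have hhoelder := lintegral_mul_norm_pow_le (μ := μ)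
    (hKx.mul (hf.pow_const 2)).aemeasurable (hKx.mul (hg.pow_const 2)).aemeasurable
    (p := 1 / 2) (q := 1 / 2) (by norm_num) (by norm_num) (by norm_num)
  simp only [Pi.mul_apply, hintegrand] at hhoelder
  exact (pow_le_pow_left' hhoelder 2).trans_eq (by rw [mul_pow, hroot_sq, hroot_sq]; rfl)

theorem IsSymmKernel.kernelOp_sq_le (hK : IsSymmKernel μ K A) {f : α → ℝ≥0∞} (hf : Measurable f)
    (x : α) : kernelOp μ K f x ^ 2 ≤ A * kernelOp μ K (fun y => f y ^ 2) x := by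
  have hcs := hK.kernelOp_mul_sq_le hf measurable_one x
  simp only [Pi.one_apply, mul_one, one_pow] at hcs
  refine hcs.trans ?_
  rw [mul_comm]
  gcongr
  simpa only [kernelOp, mul_one] using hK.mass_le x

theorem IsSymmKernel.lintegral_kernelOp_sq_mul_le [SFinite μ] (hK : IsSymmKernel μ K A)
    {f w : α → ℝ≥0∞} (hf : Measurable f) (hw : Measurable w) :
    ∫⁻ x, kernelOp μ K f x ^ 2 * w x ∂μ ≤ A * ∫⁻ x, f x ^ 2 * kernelOp μ K w x ∂μ := by
  have hTfw : Measurable fun x => kernelOp μ K (fun y => f y ^ 2) x * w x :=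
    (hK.measurable_kernelOp (hf.pow_const 2)).mul hw
  calc ∫⁻ x, kernelOp μ K f x ^ 2 * w x ∂μ
      ≤ ∫⁻ x, A * (kernelOp μ K (fun y => f y ^ 2) x * w x) ∂μ := by
        refine lintegral_mono fun x => ?_
        rw [← mul_assoc]
        exact mul_le_mul_left (hK.kernelOp_sq_le hf x) _
    _ = A * ∫⁻ x, f x ^ 2 * kernelOp μ K w x ∂μ := by
        rw [lintegral_const_mul _ hTfw, hK.lintegral_kernelOp_mul (hf.pow_const 2) hw]

theorem IsSymmKernel.kernelOp_sq_le_weight (hK : IsSymmKernel μ K A) {f h : α → ℝ≥0∞}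
    (hf : Measurable f) (hh : Measurable h) (hfh : ∀ x, f x ^ 2 ≤ h x) (hfin : ∀ᵐ x ∂μ, h x ≠ ∞)
    (a : ℝ) (x : α) :
    kernelOp μ K f x ^ 2 ≤
      kernelOp μ K (fun y => f y ^ 2 * h y ^ (-a)) x * kernelOp μ K (fun y => h y ^ a) x := by
  have hsq (c : ℝ) (y : α) : (h y ^ (c / 2)) ^ 2 = h y ^ c := by
    rw [← ENNReal.rpow_natCast, ← ENNReal.rpow_mul]
    congr 1
    push_cast
    ring
  have hsplit : ∀ᵐ y ∂μ, f y ≤ f y * h y ^ (-a / 2) * h y ^ (a / 2) := by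
    filter_upwards [hfin] with y hy
    by_cases hy0 : h y = 0
    · have : f y = 0 := by simpa [hy0] using hfh y
      simp [this]
    · rw [mul_assoc, ← ENNReal.rpow_add _ _ hy0 hy]
      simp [neg_div]
  calc kernelOp μ K f x ^ 2
      ≤ kernelOp μ K (fun y => f y * h y ^ (-a / 2) * h y ^ (a / 2)) x ^ 2 := by
        refine pow_le_pow_left' (lintegral_mono_ae ?_) 2
        filter_upwards [hsplit] with y hy
        exact mul_le_mul_right hy _
    _ ≤ _ := by
        have hfh : Measurable fun y => f y * h y ^ (-a / 2) := hf.mul (hh.pow_const _)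
        simpa only [mul_pow, hsq] using hK.kernelOp_mul_sq_le hfh (hh.pow_const (a / 2)) x

end Single

section Family

variable {ι : Type*} {K : ι → α → α → ℝ≥0∞} {A : ℝ≥0∞}

/-- The maximal function `⨆ i, T_i w` of the operators with kernels `K i` is bounded on every
`L^q`, `1 < q < ∞`. -/
def IsMaximallyBounded (μ : Measure α) (K : ι → α → α → ℝ≥0∞) : Prop :=
  ∀ q : ℝ, 1 < q → ∃ C : ℝ≥0, ∀ w : α → ℝ≥0∞, Measurable w →
    ∫⁻ x, (⨆ i, kernelOp μ (K i) w x) ^ q ∂μ ≤ C * ∫⁻ x, w x ^ q ∂μ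

theorem tsum_kernelOp_sq_le_weight (hK : ∀ i, IsSymmKernel μ (K i) A) {F : ι → α → ℝ≥0∞}
    (hF : ∀ i, Measurable (F i)) {h : α → ℝ≥0∞} (hh : Measurable h)
    (hFh : ∀ i x, F i x ^ 2 ≤ h x) (hfin : ∀ᵐ x ∂μ, h x ≠ ∞) (a : ℝ) (x : α) :
    ∑' i, kernelOp μ (K i) (F i) x ^ 2 ≤
      (∑' i, kernelOp μ (K i) (fun y => F i y ^ 2 * h y ^ (-a)) x) *
        ⨆ i, kernelOp μ (K i) (fun y => h y ^ a) x := by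
  rw [← ENNReal.tsum_mul_right]
  gcongr with i
  refine ((hK i).kernelOp_sq_le_weight (hF i) hh (hFh i) hfin a x).trans ?_
  gcongr
  exact le_iSup (fun i => kernelOp μ (K i) (fun y => h y ^ a) x) i

variable [Countable ι]

theorem measurable_iSup_kernelOp [SFinite μ] (hK : ∀ i, IsSymmKernel μ (K i) A) {w : α → ℝ≥0∞}
    (hw : Measurable w) : Measurable fun x => ⨆ i, kernelOp μ (K i) w x :=
  .iSup fun i => (hK i).measurable_kernelOp hw

theorem lintegral_tsum_kernelOp_le [SFinite μ] (hK : ∀ i, IsSymmKernel μ (K i) A)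
    {F : ι → α → ℝ≥0∞} (hF : ∀ i, Measurable (F i)) :
    ∫⁻ x, ∑' i, kernelOp μ (K i) (F i) x ∂μ ≤ A * ∫⁻ x, ∑' i, F i x ∂μ := by
  rw [lintegral_tsum fun i => ((hK i).measurable_kernelOp (hF i)).aemeasurable,
    lintegral_tsum fun i => (hF i).aemeasurable, ← ENNReal.tsum_mul_left]
  gcongr with i
  exact (hK i).lintegral_kernelOp_le (hF i)

theorem lintegral_tsum_kernelOp_sq_le [SFinite μ] (hK : ∀ i, IsSymmKernel μ (K i) A)
    {F : ι → α → ℝ≥0∞} (hF : ∀ i, Measurable (F i)) :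
    ∫⁻ x, ∑' i, kernelOp μ (K i) (F i) x ^ 2 ∂μ ≤ A ^ 2 * ∫⁻ x, ∑' i, F i x ^ 2 ∂μ := by
  have hF2 (i : ι) : Measurable fun x => F i x ^ 2 := (hF i).pow_const 2
  calc ∫⁻ x, ∑' i, kernelOp μ (K i) (F i) x ^ 2 ∂μ
      ≤ ∫⁻ x, A * ∑' i, kernelOp μ (K i) (fun y => F i y ^ 2) x ∂μ := by
        gcongr with x
        rw [← ENNReal.tsum_mul_left]
        gcongr with i
        exact (hK i).kernelOp_sq_le (hF i) x
    _ = A * ∫⁻ x, ∑' i, kernelOp μ (K i) (fun y => F i y ^ 2) x ∂μ :=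
        lintegral_const_mul _ (.tsum fun i => (hK i).measurable_kernelOp (hF2 i))
    _ ≤ A * (A * ∫⁻ x, ∑' i, F i x ^ 2 ∂μ) := by
        gcongr
        exact lintegral_tsum_kernelOp_le hK hF2
    _ = A ^ 2 * ∫⁻ x, ∑' i, F i x ^ 2 ∂μ := by ring

theorem lintegral_tsum_kernelOp_sq_mul_le [SFinite μ] (hK : ∀ i, IsSymmKernel μ (K i) A)
    {F : ι → α → ℝ≥0∞} (hF : ∀ i, Measurable (F i)) {w : α → ℝ≥0∞} (hw : Measurable w) :
    ∫⁻ x, (∑' i, kernelOp μ (K i) (F i) x ^ 2) * w x ∂μ ≤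
      A * ∫⁻ x, (∑' i, F i x ^ 2) * ⨆ i, kernelOp μ (K i) w x ∂μ := by
  have hTFw (i : ι) : Measurable fun x => kernelOp μ (K i) (F i) x ^ 2 * w x :=
    (((hK i).measurable_kernelOp (hF i)).pow_const 2).mul hw
  have hFTw (i : ι) : Measurable fun x => F i x ^ 2 * ⨆ j, kernelOp μ (K j) w x :=
    ((hF i).pow_const 2).mul (measurable_iSup_kernelOp hK hw)
  simp only [← ENNReal.tsum_mul_right]
  rw [lintegral_tsum fun i => (hTFw i).aemeasurable, lintegral_tsum fun i => (hFTw i).aemeasurable,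
    ← ENNReal.tsum_mul_left]
  gcongr with i
  refine ((hK i).lintegral_kernelOp_sq_mul_le (hF i) hw).trans ?_
  gcongr with x
  exact le_iSup (fun i => kernelOp μ (K i) w x) i

theorem lintegral_tsum_kernelOp_sq_rpow_le_of_holderConjugate [SigmaFinite μ]
    (hK : ∀ i, IsSymmKernel μ (K i) A) {r r' : ℝ} (hr : r.HolderConjugate r') {C : ℝ≥0∞}
    (hC : ∀ w : α → ℝ≥0∞, Measurable w →
      ∫⁻ x, (⨆ i, kernelOp μ (K i) w x) ^ r' ∂μ ≤ C * ∫⁻ x, w x ^ r' ∂μ)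
    {F : ι → α → ℝ≥0∞} (hF : ∀ i, Measurable (F i)) :
    ∫⁻ x, (∑' i, kernelOp μ (K i) (F i) x ^ 2) ^ r ∂μ ≤
      (A * C ^ (1 / r')) ^ r * ∫⁻ x, (∑' i, F i x ^ 2) ^ r ∂μ := by
  have hr' : 0 ≤ 1 / r' := by simpa using hr.symm.pos.le
  have hsq : Measurable fun x => ∑' i, F i x ^ 2 := .tsum fun i => (hF i).pow_const 2
  set J := ∫⁻ x, (∑' i, F i x ^ 2) ^ r ∂μ
  have hdual : ∀ w : α → ℝ≥0∞, Measurable w →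
      ∫⁻ x, (∑' i, kernelOp μ (K i) (F i) x ^ 2) * w x ∂μ ≤
        A * C ^ (1 / r') * J ^ (1 / r) * (∫⁻ x, w x ^ r' ∂μ) ^ (1 / r') := by
    intro w hw
    calc ∫⁻ x, (∑' i, kernelOp μ (K i) (F i) x ^ 2) * w x ∂μ
        ≤ A * ∫⁻ x, (∑' i, F i x ^ 2) * ⨆ i, kernelOp μ (K i) w x ∂μ :=
          lintegral_tsum_kernelOp_sq_mul_le hK hF hw
      _ ≤ A * (J ^ (1 / r) * (∫⁻ x, (⨆ i, kernelOp μ (K i) w x) ^ r' ∂μ) ^ (1 / r')) := by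
          gcongr
          exact lintegral_mul_le_Lp_mul_Lq μ hr hsq.aemeasurable
            (measurable_iSup_kernelOp hK hw).aemeasurable
      _ ≤ A * (J ^ (1 / r) * (C * ∫⁻ x, w x ^ r' ∂μ) ^ (1 / r')) := by
          gcongr
          exact hC w hw
      _ = _ := by
          rw [ENNReal.mul_rpow_of_nonneg _ _ hr']
          ring
  refine (lintegral_rpow_le_of_forall_lintegral_mul_le hr hdual).trans_eq ?_
  rw [ENNReal.mul_rpow_of_nonneg _ _ hr.nonneg, one_div r, ENNReal.rpow_inv_rpow hr.ne_zero]

theorem lintegral_tsum_kernelOp_weight_le [SFinite μ] (hK : ∀ i, IsSymmKernel μ (K i) A)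
    {F : ι → α → ℝ≥0∞} (hF : ∀ i, Measurable (F i)) (hfin : ∀ᵐ x ∂μ, ∑' i, F i x ^ 2 ≠ ∞) (a : ℝ) :
    ∫⁻ x, ∑' i, kernelOp μ (K i) (fun y => F i y ^ 2 * (∑' j, F j y ^ 2) ^ (-a)) x ∂μ ≤
      A * ∫⁻ x, (∑' i, F i x ^ 2) ^ (1 - a) ∂μ := by
  have hsq : Measurable fun x => ∑' i, F i x ^ 2 := .tsum fun i => (hF i).pow_const 2
  refine (lintegral_tsum_kernelOp_le hK fun i =>
    ((hF i).pow_const 2).mul (hsq.pow_const (-a))).trans (mul_le_mul_right ?_ A)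
  refine lintegral_mono_ae ?_
  filter_upwards [hfin] with x hx
  exact ENNReal.tsum_mul_right.trans_le (mul_rpow_neg_le_rpow_one_sub hx a)

theorem lintegral_tsum_kernelOp_sq_rpow_le_of_lt_one [SFinite μ] (hK : ∀ i, IsSymmKernel μ (K i) A)
    {r : ℝ} (hr0 : 0 < r) (hr1 : r < 1) {C : ℝ≥0∞}
    (hC : ∀ w : α → ℝ≥0∞, Measurable w →
      ∫⁻ x, (⨆ i, kernelOp μ (K i) w x) ^ (r / (1 - r)) ∂μ ≤ C * ∫⁻ x, w x ^ (r / (1 - r)) ∂μ)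
    {F : ι → α → ℝ≥0∞} (hF : ∀ i, Measurable (F i))
    (hfin : ∫⁻ x, (∑' i, F i x ^ 2) ^ r ∂μ ≠ ∞) :
    ∫⁻ x, (∑' i, kernelOp μ (K i) (F i) x ^ 2) ^ r ∂μ ≤
      A ^ r * C ^ (1 - r) * ∫⁻ x, (∑' i, F i x ^ 2) ^ r ∂μ := by
  have ha : 0 < 1 - r := sub_pos.2 hr1
  set H : α → ℝ≥0∞ := fun x => ∑' i, F i x ^ 2
  have hH : Measurable H := .tsum fun i => (hF i).pow_const 2
  have hH_fin : ∀ᵐ x ∂μ, H x ≠ ∞ := ae_ne_top_of_lintegral_rpow_ne_top hH.aemeasurable hr0 hfin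
  -- Reweighting by `H ^ (1 - r)` turns the exponent `r < 1` into an `L¹` bound and a maximal one.
  set S : α → ℝ≥0∞ := fun x => ∑' i, kernelOp μ (K i) (fun y => F i y ^ 2 * H y ^ (-(1 - r))) x
  have hS : Measurable S := .tsum fun i =>
    (hK i).measurable_kernelOp (((hF i).pow_const 2).mul (hH.pow_const _))
  have hS_le : ∫⁻ x, S x ∂μ ≤ A * ∫⁻ x, H x ^ r ∂μ := by
    simpa only [_root_.sub_sub_cancel] using lintegral_tsum_kernelOp_weight_le hK hF hH_fin (1 - r)
  set W : α → ℝ≥0∞ := fun x => ⨆ i, kernelOp μ (K i) (fun y => H y ^ (1 - r)) x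
  have hW : Measurable W := measurable_iSup_kernelOp hK (hH.pow_const _)
  have hW_le : ∫⁻ x, W x ^ (r / (1 - r)) ∂μ ≤ C * ∫⁻ x, H x ^ r ∂μ := by
    simpa only [← ENNReal.rpow_mul, mul_div_cancel₀ r ha.ne'] using hC _ (hH.pow_const (1 - r))
  have hSW (x : α) : ∑' i, kernelOp μ (K i) (F i) x ^ 2 ≤ S x * W x :=
    tsum_kernelOp_sq_le_weight hK hF hH
      (fun i x => ENNReal.le_tsum (f := fun i => F i x ^ 2) i) hH_fin (1 - r) x
  calc ∫⁻ x, (∑' i, kernelOp μ (K i) (F i) x ^ 2) ^ r ∂μ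
      ≤ ∫⁻ x, S x ^ r * (W x ^ (r / (1 - r))) ^ (1 - r) ∂μ := by
        gcongr with x
        rw [← ENNReal.rpow_mul, div_mul_cancel₀ r ha.ne', ← ENNReal.mul_rpow_of_nonneg _ _ hr0.le]
        exact ENNReal.rpow_le_rpow (hSW x) hr0.le
    _ ≤ (∫⁻ x, S x ∂μ) ^ r * (∫⁻ x, W x ^ (r / (1 - r)) ∂μ) ^ (1 - r) :=
        lintegral_mul_norm_pow_le hS.aemeasurable (hW.pow_const _).aemeasurable hr0.le ha.le
          (by ring)
    _ ≤ (A * ∫⁻ x, H x ^ r ∂μ) ^ r * (C * ∫⁻ x, H x ^ r ∂μ) ^ (1 - r) := by gcongr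
    _ = A ^ r * C ^ (1 - r) * ∫⁻ x, H x ^ r ∂μ := by
        rw [ENNReal.mul_rpow_of_nonneg _ _ hr0.le, ENNReal.mul_rpow_of_nonneg _ _ ha.le,
          mul_mul_mul_comm, ← ENNReal.rpow_add_of_nonneg _ _ hr0.le ha.le, add_sub_cancel,
          ENNReal.rpow_one]

theorem IsMaximallyBounded.exists_lintegral_tsum_sq_rpow_le [SigmaFinite μ]
    (hmax : IsMaximallyBounded μ K) (hK : ∀ i, IsSymmKernel μ (K i) A) (hA : A ≠ ∞)
    {p : ℝ} (hp : 1 < p) :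
    ∃ C : ℝ≥0, ∀ F : ι → α → ℝ≥0∞, (∀ i, Measurable (F i)) →
      ∫⁻ x, (∑' i, kernelOp μ (K i) (F i) x ^ 2) ^ (p / 2) ∂μ ≤
        C * ∫⁻ x, (∑' i, F i x ^ 2) ^ (p / 2) ∂μ := by
  lift A to ℝ≥0 using hA
  rcases lt_trichotomy (p / 2) 1 with hr | hr | hr
  · have hr0 : 0 < p / 2 := by linarith
    obtain ⟨C, hC⟩ := hmax (p / 2 / (1 - p / 2)) ((one_lt_div (sub_pos.2 hr)).2 (by linarith))
    refine ⟨A ^ (p / 2) * C ^ (1 - p / 2) + 1, fun F hF => ?_⟩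
    by_cases hfin : ∫⁻ x, (∑' i, F i x ^ 2) ^ (p / 2) ∂μ = ∞
    · rw [hfin, ENNReal.mul_top (by simp)]
      exact le_top
    refine (lintegral_tsum_kernelOp_sq_rpow_le_of_lt_one hK hr0 hr hC hF hfin).trans ?_
    rw [ENNReal.coe_add, ENNReal.coe_mul, ENNReal.coe_rpow_of_nonneg _ hr0.le,
      ENNReal.coe_rpow_of_nonneg _ (sub_pos.2 hr).le]
    exact mul_le_mul_left le_self_add _
  · refine ⟨A ^ 2, fun F hF => ?_⟩
    simpa only [hr, ENNReal.rpow_one, ENNReal.coe_pow] using lintegral_tsum_kernelOp_sq_le hK hF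
  · have hconj := Real.HolderConjugate.conjExponent hr
    obtain ⟨C, hC⟩ := hmax _ hconj.symm.lt
    refine ⟨(A * C ^ (1 / (p / 2).conjExponent)) ^ (p / 2), fun F hF => ?_⟩
    rw [ENNReal.coe_rpow_of_nonneg _ hconj.nonneg, ENNReal.coe_mul,
      ENNReal.coe_rpow_of_nonneg _ (one_div_nonneg.2 hconj.symm.nonneg)]
    exact lintegral_tsum_kernelOp_sq_rpow_le_of_holderConjugate hK hconj hC hF

end Family

end KernelOperator

section DecayKernel

open Metric Module

variable {E : Type*} [NormedAddCommGroup E] [NormedSpace ℝ E]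

/-- The radial kernel `r ^ (-d) (1 + |u| / r) ^ (-(d + 1))`, `d = dim E`, at scale `r`. It dominates
the commutators below, and one power of decay beyond the dimension makes it summable over dyadic
annuli. -/
def decayKernel (r : ℝ) (u : E) : ℝ :=
  (r ^ finrank ℝ E)⁻¹ * ((1 + ‖r⁻¹ • u‖) ^ (finrank ℝ E + 1))⁻¹

theorem decayKernel_neg (r : ℝ) (u : E) : decayKernel r (-u) = decayKernel r u := by
  simp only [decayKernel, smul_neg, norm_neg]

theorem continuous_decayKernel (r : ℝ) : Continuous (decayKernel r : E → ℝ) := by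
  unfold decayKernel
  have hpos (u : E) : (1 + ‖r⁻¹ • u‖) ^ (finrank ℝ E + 1) ≠ 0 := by positivity
  fun_prop (disch := exact hpos)

theorem ofReal_decayKernel_le_tsum {r : ℝ} (hr : 0 < r) (u : E) :
    ENNReal.ofReal (decayKernel r u) ≤ ∑' i : ℕ,
      ENNReal.ofReal ((r ^ finrank ℝ E)⁻¹ * ((2 ^ i) ^ (finrank ℝ E + 1))⁻¹) *
        (ball 0 (2 ^ (i + 1) * r)).indicator 1 u := by
  have hnorm : ‖r⁻¹ • u‖ = ‖u‖ / r := by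
    rw [norm_smul, norm_inv, Real.norm_of_nonneg hr.le, inv_mul_eq_div]
  obtain ⟨i, hi, hi'⟩ := exists_nat_pow_near (show 1 ≤ 1 + ‖r⁻¹ • u‖ by simp) one_lt_two
  have hu : u ∈ ball 0 (2 ^ (i + 1) * r) := by
    rw [mem_ball_zero_iff, ← div_lt_iff₀ hr, ← hnorm]
    linarith
  refine le_trans ?_ (ENNReal.le_tsum i)
  rw [Set.indicator_of_mem hu, Pi.one_apply, mul_one, decayKernel]
  gcongr

variable [FiniteDimensional ℝ E] [MeasurableSpace E] [BorelSpace E] {μ : Measure E}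
  [μ.IsAddHaarMeasure]

theorem ofReal_mul_addHaar_ball_two_pow_mul {r : ℝ} (hr : 0 < r) (i : ℕ) (x : E) :
    ENNReal.ofReal ((r ^ finrank ℝ E)⁻¹ * ((2 ^ i) ^ (finrank ℝ E + 1))⁻¹) *
      μ (ball x (2 ^ (i + 1) * r)) = 2 ^ finrank ℝ E * μ (ball 0 1) * 2⁻¹ ^ i := by
  have hscale : (r ^ finrank ℝ E)⁻¹ * ((2 ^ i) ^ (finrank ℝ E + 1))⁻¹ *
      (2 ^ (i + 1) * r) ^ finrank ℝ E = 2 ^ finrank ℝ E * (2 ^ i)⁻¹ := by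
    rw [mul_pow, pow_succ 2 i, mul_pow, pow_succ]
    field_simp
  rw [μ.addHaar_ball_of_pos x (by positivity), ← mul_assoc, ← ENNReal.ofReal_mul (by positivity),
    hscale, ENNReal.ofReal_mul (by positivity), ENNReal.ofReal_inv_of_pos (by positivity),
    ENNReal.ofReal_pow zero_le_two, ENNReal.ofReal_pow zero_le_two, ofReal_ofNat, ENNReal.inv_pow]
  ring

theorem kernelOp_decayKernel_le {r : ℝ} (hr : 0 < r) {w : E → ℝ≥0∞} (hw : Measurable w) (x : E) :
    kernelOp μ (fun x y => ENNReal.ofReal (decayKernel r (x - y))) w x ≤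
      2 ^ (finrank ℝ E + 1) * μ (ball 0 1) * hardyLittlewoodMaximal μ w x := by
  set c : ℕ → ℝ≥0∞ := fun i =>
    ENNReal.ofReal ((r ^ finrank ℝ E)⁻¹ * ((2 ^ i) ^ (finrank ℝ E + 1))⁻¹)
  set R : ℕ → ℝ := fun i => 2 ^ (i + 1) * r
  have hR (i : ℕ) : 0 < R i := by positivity
  have hmeas (i : ℕ) : Measurable fun y => c i * (ball x (R i)).indicator w y :=
    (hw.indicator measurableSet_ball).const_mul _
  have hshift (i : ℕ) (y : E) :
      (ball 0 (R i)).indicator 1 (x - y) * w y = (ball x (R i)).indicator w y := by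
    simp only [Set.indicator, mem_ball_iff_norm', zero_sub, norm_neg, Pi.one_apply, ite_mul,
      one_mul, zero_mul]
  have hball (i : ℕ) : c i * ∫⁻ y in ball x (R i), w y ∂μ ≤
      2 ^ finrank ℝ E * μ (ball 0 1) * 2⁻¹ ^ i * hardyLittlewoodMaximal μ w x := by
    rw [← ofReal_mul_addHaar_ball_two_pow_mul hr i x, mul_assoc]
    gcongr
    rw [← measure_mul_setLAverage w measure_ball_lt_top.ne]
    gcongr
    exact setLAverage_ball_le_hardyLittlewoodMaximal w x (hR i)
  calc kernelOp μ (fun x y => ENNReal.ofReal (decayKernel r (x - y))) w x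
      ≤ ∫⁻ y, ∑' i, c i * (ball x (R i)).indicator w y ∂μ := by
        refine lintegral_mono fun y => ?_
        refine (mul_le_mul_left (ofReal_decayKernel_le_tsum hr (x - y)) (w y)).trans_eq ?_
        simp only [← ENNReal.tsum_mul_right, mul_assoc, ← hshift]
        rfl
    _ = ∑' i, c i * ∫⁻ y in ball x (R i), w y ∂μ := by
        rw [lintegral_tsum fun i => (hmeas i).aemeasurable]
        simp only [lintegral_const_mul' _ _ ofReal_ne_top, lintegral_indicator measurableSet_ball,
          c]
    _ ≤ ∑' i, 2 ^ finrank ℝ E * μ (ball 0 1) * 2⁻¹ ^ i * hardyLittlewoodMaximal μ w x :=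
        ENNReal.tsum_le_tsum hball
    _ = _ := by
        rw [ENNReal.tsum_mul_right, ENNReal.tsum_mul_left, ENNReal.tsum_geometric,
          ENNReal.one_sub_inv_two, inv_inv]
        ring

theorem isSymmKernel_decayKernel {r : ℝ} (hr : 0 < r) :
    IsSymmKernel μ (fun x y => ENNReal.ofReal (decayKernel r (x - y)))
      (2 ^ (finrank ℝ E + 1) * μ (ball (0 : E) 1)) where
  measurable :=
    ((continuous_decayKernel r).measurable.comp (measurable_fst.sub measurable_snd)).ennreal_ofReal
  symm x y := by rw [← decayKernel_neg, neg_sub]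
  mass_le x := by
    have hle := kernelOp_decayKernel_le (μ := μ) hr measurable_one x
    simp only [kernelOp, Pi.one_apply, mul_one] at hle
    exact hle.trans (mul_le_of_le_one_right zero_le (hardyLittlewoodMaximal_one_le x))

theorem isMaximallyBounded_decayKernel {ι : Type*} {r : ι → ℝ} (hr : ∀ i, 0 < r i) :
    IsMaximallyBounded μ fun i x y => ENNReal.ofReal (decayKernel (r i) (x - y)) := by
  intro q hq
  obtain ⟨C, hC⟩ := exists_lintegral_hardyLittlewoodMaximal_rpow_le μ hq
  have hq0 : 0 ≤ q := by linarith
  set A : ℝ≥0∞ := 2 ^ (finrank ℝ E + 1) * μ (ball (0 : E) 1)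
  have hA : A ^ q ≠ ∞ := ENNReal.rpow_ne_top_of_nonneg hq0 (by finiteness)
  refine ⟨(A ^ q).toNNReal * C, fun w hw => ?_⟩
  calc ∫⁻ x, (⨆ i, kernelOp μ (fun x y => ENNReal.ofReal (decayKernel (r i) (x - y))) w x) ^ q ∂μ
      ≤ ∫⁻ x, (A * hardyLittlewoodMaximal μ w x) ^ q ∂μ := by
        gcongr with x
        exact iSup_le fun i => kernelOp_decayKernel_le (hr i) hw x
    _ = A ^ q * ∫⁻ x, hardyLittlewoodMaximal μ w x ^ q ∂μ := by
        simp only [ENNReal.mul_rpow_of_nonneg _ _ hq0, lintegral_const_mul' _ _ hA]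
    _ ≤ _ := by
        rw [ENNReal.coe_mul, ENNReal.coe_toNNReal hA, mul_assoc]
        gcongr
        exact hC w hw

end DecayKernel

section Commutator

open Metric

variable {E : Type*} [NormedAddCommGroup E] [MeasurableSpace E] {μ : Measure E}

/-- The commutator `[b, T] f` of multiplication by `b` with the integral operator `T` with kernel
`ψ`. -/
def kernelCommutator (μ : Measure E) (ψ : E → E → ℝ) (b f : E → ℝ) (z : E) : ℝ :=
  b z * ∫ y, ψ z y * f y ∂μ - ∫ y, ψ z y * (b y * f y) ∂μ

/-- Size and Lipschitz estimates, with constant `κ y`, for `z ↦ ψ z y` on the ball of radius `r`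
about `x`. The factor `r + |x - y|` is the decay that absorbs one difference of a Lipschitz
function. -/
structure IsRegularKernelAt (μ : Measure E) (ψ : E → E → ℝ) (κ : E → ℝ) (x : E) (r : ℝ) :
    Prop where
  aestronglyMeasurable : ∀ z, AEStronglyMeasurable (ψ z) μ
  norm_mul_le : ∀ z ∈ closedBall x r, ∀ y, ‖ψ z y‖ * (r + dist x y) ≤ r * κ y
  norm_sub_mul_le : ∀ z ∈ closedBall x r, ∀ y,
    ‖ψ z y - ψ x y‖ * (r + dist x y) ≤ dist z x * κ y

namespace IsRegularKernelAt

variable {ψ : E → E → ℝ} {κ : E → ℝ} {x z : E} {r : ℝ}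

theorem norm_le (h : IsRegularKernelAt μ ψ κ x r) (hr : 0 < r) (hz : z ∈ closedBall x r) (y : E) :
    ‖ψ z y‖ ≤ κ y := by
  refine le_of_mul_le_mul_left (le_trans ?_ (h.norm_mul_le z hz y)) hr
  rw [mul_comm]
  gcongr
  exact le_add_of_nonneg_right dist_nonneg

theorem nonneg (h : IsRegularKernelAt μ ψ κ x r) (hr : 0 < r) (y : E) : 0 ≤ κ y :=
  (norm_nonneg _).trans (h.norm_le hr (mem_closedBall_self hr.le) y)

theorem norm_mul_dist_le (h : IsRegularKernelAt μ ψ κ x r) (hr : 0 < r) (hz : z ∈ closedBall x r)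
    (y : E) : ‖ψ z y‖ * dist x y ≤ r * κ y :=
  (mul_le_mul_of_nonneg_left (le_add_of_nonneg_left hr.le) (norm_nonneg _)).trans
    (h.norm_mul_le z hz y)

theorem norm_sub_mul_dist_le (h : IsRegularKernelAt μ ψ κ x r) (hr : 0 < r)
    (hz : z ∈ closedBall x r) (y : E) : ‖ψ z y - ψ x y‖ * dist x y ≤ dist z x * κ y :=
  (mul_le_mul_of_nonneg_left (le_add_of_nonneg_left hr.le) (norm_nonneg _)).trans
    (h.norm_sub_mul_le z hz y)

variable {f b : E → ℝ} {L : ℝ≥0}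

theorem integrable_mul (h : IsRegularKernelAt μ ψ κ x r) (hr : 0 < r) (hz : z ∈ closedBall x r)
    (hf : AEStronglyMeasurable f μ) (hκf : Integrable (fun y => κ y * ‖f y‖) μ) :
    Integrable (fun y => ψ z y * f y) μ := by
  refine hκf.mono' ((h.aestronglyMeasurable z).mul hf) (.of_forall fun y => ?_)
  rw [norm_mul]
  gcongr
  exact h.norm_le hr hz y

theorem integrable_mul_lipschitz_mul [OpensMeasurableSpace E] (h : IsRegularKernelAt μ ψ κ x r)
    (hr : 0 < r) (hz : z ∈ closedBall x r) (hb : LipschitzWith L b)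
    (hf : AEStronglyMeasurable f μ) (hκf : Integrable (fun y => κ y * ‖f y‖) μ) :
    Integrable (fun y => ψ z y * (b y * f y)) μ := by
  refine (hκf.const_mul (‖b x‖ + L * r)).mono' ((h.aestronglyMeasurable z).mul
    (hb.continuous.aestronglyMeasurable.mul hf)) (.of_forall fun y => ?_)
  have hby : ‖b y‖ ≤ ‖b x‖ + L * dist x y := by
    have hdist := hb.dist_le_mul y x
    rw [dist_eq_norm, dist_comm] at hdist
    linarith [norm_le_norm_add_norm_sub' (b y) (b x)]
  calc ‖ψ z y * (b y * f y)‖ = ‖ψ z y‖ * ‖b y‖ * ‖f y‖ := by rw [norm_mul, norm_mul, mul_assoc]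
    _ ≤ ‖ψ z y‖ * (‖b x‖ + L * dist x y) * ‖f y‖ := by gcongr
    _ = (‖b x‖ * ‖ψ z y‖ + L * (‖ψ z y‖ * dist x y)) * ‖f y‖ := by ring
    _ ≤ (‖b x‖ * κ y + L * (r * κ y)) * ‖f y‖ := by
        gcongr (_ * ?_ + _ * ?_) * _
        · exact h.norm_le hr hz y
        · exact h.norm_mul_dist_le hr hz y
    _ = (‖b x‖ + L * r) * (κ y * ‖f y‖) := by ring

theorem norm_lipschitz_sub_mul_sub_le (h : IsRegularKernelAt μ ψ κ x r) (hr : 0 < r)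
    (hz : z ∈ closedBall x r) (hb : LipschitzWith L b) (y : E) :
    ‖(b z - b y) * ψ z y - (b x - b y) * ψ x y‖ ≤ 2 * L * dist z x * κ y :=
  calc ‖(b z - b y) * ψ z y - (b x - b y) * ψ x y‖
      = ‖(b z - b x) * ψ z y + (b x - b y) * (ψ z y - ψ x y)‖ := by ring_nf
    _ ≤ dist (b z) (b x) * ‖ψ z y‖ + dist (b x) (b y) * ‖ψ z y - ψ x y‖ := by
        simpa only [norm_mul, dist_eq_norm] using
          norm_add_le ((b z - b x) * ψ z y) ((b x - b y) * (ψ z y - ψ x y))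
    _ ≤ L * dist z x * κ y + L * dist x y * ‖ψ z y - ψ x y‖ := by
        gcongr
        · exact hb.dist_le_mul z x
        · exact h.norm_le hr hz y
        · exact hb.dist_le_mul x y
    _ ≤ L * dist z x * κ y + L * (dist z x * κ y) := by
        rw [mul_assoc (L : ℝ) (dist x y), mul_comm (dist x y)]
        gcongr _ + _ * ?_
        exact h.norm_sub_mul_dist_le hr hz y
    _ = 2 * L * dist z x * κ y := by ring

variable [OpensMeasurableSpace E]

theorem norm_kernelCommutator_sub_le (h : IsRegularKernelAt μ ψ κ x r) (hr : 0 < r)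
    (hz : z ∈ closedBall x r) (hb : LipschitzWith L b) (hf : AEStronglyMeasurable f μ)
    (hκf : Integrable (fun y => κ y * ‖f y‖) μ) :
    ‖kernelCommutator μ ψ b f z - kernelCommutator μ ψ b f x‖ ≤
      2 * L * (∫ y, κ y * ‖f y‖ ∂μ) * ‖z - x‖ := by
  have hint {v : E} (hv : v ∈ closedBall x r) :
      Integrable (fun y => b v * (ψ v y * f y) - ψ v y * (b y * f y)) μ :=
    ((h.integrable_mul hr hv hf hκf).const_mul _).sub
      (h.integrable_mul_lipschitz_mul hr hv hb hf hκf)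
  have hcomm {v : E} (hv : v ∈ closedBall x r) : kernelCommutator μ ψ b f v =
      ∫ y, (b v * (ψ v y * f y) - ψ v y * (b y * f y)) ∂μ := by
    rw [integral_sub ((h.integrable_mul hr hv hf hκf).const_mul _)
      (h.integrable_mul_lipschitz_mul hr hv hb hf hκf), integral_const_mul, kernelCommutator]
  have hx : x ∈ closedBall x r := mem_closedBall_self hr.le
  rw [hcomm hz, hcomm hx, ← integral_sub (hint hz) (hint hx), mul_right_comm, ← integral_const_mul]
  refine norm_integral_le_of_norm_le (hκf.const_mul _) (.of_forall fun y => ?_)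
  calc ‖b z * (ψ z y * f y) - ψ z y * (b y * f y) - (b x * (ψ x y * f y) - ψ x y * (b y * f y))‖
      = ‖(b z - b y) * ψ z y - (b x - b y) * ψ x y‖ * ‖f y‖ := by
        rw [← norm_mul]
        ring_nf
    _ ≤ 2 * L * dist z x * κ y * ‖f y‖ := by
        gcongr
        exact h.norm_lipschitz_sub_mul_sub_le hr hz hb y
    _ = 2 * L * ‖z - x‖ * (κ y * ‖f y‖) := by rw [dist_eq_norm, mul_assoc _ (κ y)]

variable [NormedSpace ℝ E]

theorem norm_fderiv_kernelCommutator_le (h : IsRegularKernelAt μ ψ κ x r) (hr : 0 < r)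
    (hb : LipschitzWith L b) (hf : AEStronglyMeasurable f μ)
    (hκf : Integrable (fun y => κ y * ‖f y‖) μ) :
    ‖fderiv ℝ (kernelCommutator μ ψ b f) x‖ ≤ 2 * L * ∫ y, κ y * ‖f y‖ ∂μ := by
  have hnonneg : 0 ≤ ∫ y, κ y * ‖f y‖ ∂μ :=
    integral_nonneg fun y => mul_nonneg (h.nonneg hr y) (norm_nonneg _)
  refine norm_fderiv_le_of_lip' ℝ (by positivity) ?_
  filter_upwards [closedBall_mem_nhds x hr] with z hz
  exact h.norm_kernelCommutator_sub_le hr hz hb hf hκf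

end IsRegularKernelAt

variable {ψ : E → E → ℝ} {b f : E → ℝ}

theorem kernelCommutator_eq_zero_of_lipschitzWith_zero (hb : LipschitzWith 0 b) :
    kernelCommutator μ ψ b f = 0 := by
  funext z
  have hconst (y : E) : b y = b z := by
    simpa only [NNReal.coe_zero, zero_mul, dist_le_zero] using hb.dist_le_mul y z
  have hpull : ∫ y, ψ z y * (b y * f y) ∂μ = b z * ∫ y, ψ z y * f y ∂μ := by
    simp only [hconst, mul_left_comm _ (b z), integral_const_mul]
  rw [kernelCommutator, hpull, sub_self, Pi.zero_apply]

theorem IsRegularKernelAt.enorm_fderiv_kernelCommutator_le [NormedSpace ℝ E]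
    [OpensMeasurableSpace E] {κ : E → ℝ} {x : E} {r : ℝ} {L : ℝ≥0}
    (h : IsRegularKernelAt μ ψ κ x r) (hr : 0 < r) (hκ : AEStronglyMeasurable κ μ)
    (hb : LipschitzWith L b) (hf : AEStronglyMeasurable f μ) :
    ‖fderiv ℝ (kernelCommutator μ ψ b f) x‖ₑ ≤
      2 * L * ∫⁻ y, ENNReal.ofReal (κ y) * ‖f y‖ₑ ∂μ := by
  have hκ0 := h.nonneg hr
  have hint_eq : ∫⁻ y, ENNReal.ofReal (κ y) * ‖f y‖ₑ ∂μ =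
      ∫⁻ y, ENNReal.ofReal (κ y * ‖f y‖) ∂μ := by
    simp only [ENNReal.ofReal_mul (hκ0 _), ofReal_norm]
  rcases eq_or_ne L 0 with rfl | hL
  · rw [kernelCommutator_eq_zero_of_lipschitzWith_zero hb, fderiv_zero]
    exact (enorm_zero (E := E →L[ℝ] ℝ)).trans_le zero_le
  have hnonneg : ∀ᵐ y ∂μ, 0 ≤ κ y * ‖f y‖ :=
    .of_forall fun y => mul_nonneg (hκ0 y) (norm_nonneg _)
  by_cases hfin : ∫⁻ y, ENNReal.ofReal (κ y * ‖f y‖) ∂μ = ∞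
  · rw [hint_eq, hfin, ENNReal.mul_top (by simpa using hL)]
    exact le_top
  have hκf : Integrable (fun y => κ y * ‖f y‖) μ :=
    (lintegral_ofReal_ne_top_iff_integrable (hκ.mul hf.norm) hnonneg).1 hfin
  rw [hint_eq, ← ofReal_integral_eq_lintegral_ofReal hκf hnonneg, ← ofReal_norm]
  refine (ENNReal.ofReal_le_ofReal (h.norm_fderiv_kernelCommutator_le hr hb hf hκf)).trans_eq ?_
  rw [ENNReal.ofReal_mul (by positivity), ENNReal.ofReal_mul zero_le_two, ofReal_ofNat,
    ENNReal.ofReal_coe_nnreal]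

end Commutator

section PolynomialDecay

open Metric Module

variable {E : Type*} [NormedAddCommGroup E]

theorem mul_one_add_norm_pow_le_of_dist_le_one {u v : E} (huv : dist v u ≤ 1) {a c : ℝ}
    (ha : 0 ≤ a) {N : ℕ} (h : a * (1 + ‖v‖) ^ N ≤ c) : a * (1 + ‖u‖) ^ N ≤ 2 ^ N * c := by
  have hnorm : 1 + ‖u‖ ≤ 2 * (1 + ‖v‖) := by
    rw [dist_eq_norm, norm_sub_rev] at huv
    linarith [norm_sub_norm_le u v, norm_nonneg v]
  calc a * (1 + ‖u‖) ^ N ≤ a * (2 * (1 + ‖v‖)) ^ N := by gcongr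
    _ = 2 ^ N * (a * (1 + ‖v‖) ^ N) := by rw [mul_pow, mul_left_comm]
    _ ≤ 2 ^ N * c := by gcongr

variable [NormedSpace ℝ E]

/-- The part of the Schwartz class condition that the commutator estimate needs: `φ` and its
derivative are `O((1 + |u|) ^ (-N))`, with explicit constant `c`. -/
structure HasPolynomialDecay (φ : E → ℝ) (N : ℕ) (c : ℝ) : Prop where
  differentiable : Differentiable ℝ φ
  norm_mul_pow_le : ∀ u, ‖φ u‖ * (1 + ‖u‖) ^ N ≤ c
  norm_fderiv_mul_pow_le : ∀ u, ‖fderiv ℝ φ u‖ * (1 + ‖u‖) ^ N ≤ c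

theorem exists_hasPolynomialDecay (φ : SchwartzMap E ℝ) (N : ℕ) :
    ∃ c, HasPolynomialDecay φ N c := by
  refine ⟨2 ^ N * (Finset.Iic (N, 1)).sup (fun m => SchwartzMap.seminorm ℝ m.1 m.2) φ,
    φ.differentiable, fun u => ?_, fun u => ?_⟩
  · rw [mul_comm, ← norm_iteratedFDeriv_zero (𝕜 := ℝ)]
    exact φ.one_add_le_sup_seminorm_apply (𝕜 := ℝ) (m := (N, 1)) le_rfl zero_le_one u
  · rw [mul_comm, ← norm_iteratedFDeriv_one]
    exact φ.one_add_le_sup_seminorm_apply (𝕜 := ℝ) (m := (N, 1)) le_rfl le_rfl u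

theorem HasPolynomialDecay.norm_sub_mul_pow_le {φ : E → ℝ} {N : ℕ} {c : ℝ}
    (h : HasPolynomialDecay φ N c) {u v : E} (huv : dist v u ≤ 1) :
    ‖φ v - φ u‖ * (1 + ‖u‖) ^ N ≤ 2 ^ N * c * dist v u := by
  have hderiv : ∀ w ∈ closedBall u 1, ‖fderiv ℝ φ w‖ ≤ 2 ^ N * c / (1 + ‖u‖) ^ N := fun w hw => by
    rw [le_div_iff₀ (by positivity)]
    exact mul_one_add_norm_pow_le_of_dist_le_one hw (norm_nonneg _) (h.norm_fderiv_mul_pow_le w)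
  have hmvt : ‖φ v - φ u‖ ≤ 2 ^ N * c / (1 + ‖u‖) ^ N * ‖v - u‖ :=
    (convex_closedBall u 1).norm_image_sub_le_of_norm_fderiv_le (fun w _ => h.differentiable w)
      hderiv (mem_closedBall_self zero_le_one) huv
  rwa [dist_eq_norm, ← le_div_iff₀ (by positivity), mul_div_right_comm]

theorem mul_add_norm_le_mul_decayKernel {r : ℝ} (hr : 0 < r) {a C : ℝ} {u : E}
    (h : a * (1 + ‖r⁻¹ • u‖) ^ (finrank ℝ E + 2) ≤ C) :
    (r ^ finrank ℝ E)⁻¹ * a * (r + ‖u‖) ≤ r * (C * decayKernel r u) := by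
  have hadd : r + ‖u‖ = r * (1 + ‖r⁻¹ • u‖) := by
    rw [norm_smul, norm_inv, Real.norm_of_nonneg hr.le, mul_one_add, mul_inv_cancel_left₀ hr.ne']
  have hdecay : a * (1 + ‖r⁻¹ • u‖) ≤ C * ((1 + ‖r⁻¹ • u‖) ^ (finrank ℝ E + 1))⁻¹ := by
    rwa [← div_eq_mul_inv, le_div_iff₀ (by positivity), mul_assoc, ← pow_succ']
  calc (r ^ finrank ℝ E)⁻¹ * a * (r + ‖u‖)
      = r * (r ^ finrank ℝ E)⁻¹ * (a * (1 + ‖r⁻¹ • u‖)) := by rw [hadd]; ring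
    _ ≤ r * (r ^ finrank ℝ E)⁻¹ * (C * ((1 + ‖r⁻¹ • u‖) ^ (finrank ℝ E + 1))⁻¹) := by gcongr
    _ = r * (C * decayKernel r u) := by rw [decayKernel]; ring

/-- Convolution with the dilate `u ↦ r ^ (-d) φ (u / r)`, `d = dim E`, of `φ`. -/
def dilatedConv [MeasurableSpace E] (μ : Measure E) (φ : E → ℝ) (r : ℝ) (f : E → ℝ) (x : E) : ℝ :=
  ∫ y, (r ^ finrank ℝ E)⁻¹ * φ (r⁻¹ • (x - y)) * f y ∂μ

variable [MeasurableSpace E] [BorelSpace E] {μ : Measure E}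

theorem HasPolynomialDecay.isRegularKernelAt {φ : E → ℝ} {c r : ℝ}
    (h : HasPolynomialDecay φ (finrank ℝ E + 2) c) (hr : 0 < r) (x : E) :
    IsRegularKernelAt μ (fun z y => (r ^ finrank ℝ E)⁻¹ * φ (r⁻¹ • (z - y)))
      (fun y => 2 ^ (finrank ℝ E + 2) * c * decayKernel r (x - y)) x r := by
  have hdist (y z : E) : r * dist (r⁻¹ • (z - y)) (r⁻¹ • (x - y)) = dist z x := by
    rw [dist_smul₀, dist_sub_right, norm_inv, Real.norm_of_nonneg hr.le,
      mul_inv_cancel_left₀ hr.ne']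
  have hle {z : E} (hz : z ∈ closedBall x r) (y : E) :
      dist (r⁻¹ • (z - y)) (r⁻¹ • (x - y)) ≤ 1 := by
    rwa [← mul_le_mul_iff_right₀ hr, hdist, mul_one]
  have hrd : ‖(r ^ finrank ℝ E)⁻¹‖ = (r ^ finrank ℝ E)⁻¹ := Real.norm_of_nonneg (by positivity)
  refine ⟨fun z => ?_, fun z hz y => ?_, fun z hz y => ?_⟩
  · have := h.differentiable.continuous
    exact Continuous.aestronglyMeasurable (by fun_prop)
  · rw [norm_mul, hrd, dist_eq_norm]
    exact mul_add_norm_le_mul_decayKernel hr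
      (mul_one_add_norm_pow_le_of_dist_le_one (hle hz y) (norm_nonneg _) (h.norm_mul_pow_le _))
  · rw [← mul_sub, norm_mul, hrd, ← hdist y z, dist_eq_norm x]
    refine (mul_add_norm_le_mul_decayKernel hr (h.norm_sub_mul_pow_le (hle hz y))).trans_eq ?_
    ring

theorem HasPolynomialDecay.enorm_fderiv_commutator_le [FiniteDimensional ℝ E] {φ : E → ℝ}
    {c r : ℝ} (h : HasPolynomialDecay φ (finrank ℝ E + 2) c) (hr : 0 < r) {b f : E → ℝ} {L : ℝ≥0}
    (hb : LipschitzWith L b) (hf : AEStronglyMeasurable f μ) (x : E) :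
    ‖fderiv ℝ (fun z => b z * dilatedConv μ φ r f z -
        dilatedConv μ φ r (fun y => b y * f y) z) x‖ₑ ≤
      ENNReal.ofReal (2 ^ (finrank ℝ E + 3) * c) * L *
        kernelOp μ (fun x y => ENNReal.ofReal (decayKernel r (x - y))) (‖f ·‖ₑ) x := by
  have hc : 0 ≤ c := le_trans (by positivity) (h.norm_mul_pow_le 0)
  have hcont := continuous_decayKernel (E := E) r
  have hκ : Continuous fun y => 2 ^ (finrank ℝ E + 2) * c * decayKernel r (x - y) := by fun_prop
  refine ((h.isRegularKernelAt hr x).enorm_fderiv_kernelCommutator_le hr hκ.aestronglyMeasurable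
    hb hf).trans_eq ?_
  have hpull (y : E) : ENNReal.ofReal (2 ^ (finrank ℝ E + 2) * c * decayKernel r (x - y)) * ‖f y‖ₑ =
      ENNReal.ofReal (2 ^ (finrank ℝ E + 2) * c) *
        (ENNReal.ofReal (decayKernel r (x - y)) * ‖f y‖ₑ) := by
    rw [ENNReal.ofReal_mul (by positivity), mul_assoc]
  have hpow : (2 : ℝ) ^ (finrank ℝ E + 3) * c = 2 * (2 ^ (finrank ℝ E + 2) * c) := by ring
  rw [lintegral_congr hpull, lintegral_const_mul' _ _ ofReal_ne_top, hpow,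
    ENNReal.ofReal_mul zero_le_two, ofReal_ofNat, kernelOp]
  ring

end PolynomialDecay

theorem stmt17_general {E : Type*} [NormedAddCommGroup E] [NormedSpace ℝ E]
    [FiniteDimensional ℝ E] [MeasurableSpace E] [BorelSpace E] {μ : Measure E}
    [μ.IsAddHaarMeasure] {ι : Type*} [Countable ι] {φ : ι → E → ℝ} {c : ℝ}
    (hφ : ∀ i, HasPolynomialDecay (φ i) (Module.finrank ℝ E + 2) c) {r : ι → ℝ} (hr : ∀ i, 0 < r i)
    {p : ℝ} (hp : 1 < p) :
    ∃ C : ℝ, 0 < C ∧ ∀ (b : E → ℝ) (L : ℝ≥0), LipschitzWith L b →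
      ∀ f : ι → E → ℝ, (∀ i, Measurable (f i)) →
      (∫⁻ x, (∑' i, ‖fderiv ℝ (fun z => b z * dilatedConv μ (φ i) (r i) (f i) z -
            dilatedConv μ (φ i) (r i) (fun y => b y * f i y) z) x‖ₑ ^ 2) ^ (p / 2) ∂μ) ^ (1 / p) ≤
        ENNReal.ofReal C * L * (∫⁻ x, (∑' i, ‖f i x‖ₑ ^ 2) ^ (p / 2) ∂μ) ^ (1 / p) := by
  have hp0 : 0 < p := zero_lt_one.trans hp
  have hA : 2 ^ (Module.finrank ℝ E + 1) * μ (Metric.ball 0 1) ≠ ∞ :=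
    ENNReal.mul_ne_top (by finiteness) measure_ball_lt_top.ne
  obtain ⟨C, hC⟩ := (isMaximallyBounded_decayKernel (μ := μ) hr).exists_lintegral_tsum_sq_rpow_le
    (fun i => isSymmKernel_decayKernel (hr i)) hA hp
  set D : ℝ≥0 := (2 ^ (Module.finrank ℝ E + 3) * c).toNNReal
  refine ⟨D * C ^ (1 / p) + 1, by positivity, fun b L hb f hf => ?_⟩
  have hconst : (D : ℝ≥0∞) * L * (C : ℝ≥0∞) ^ (1 / p) ≤
      ENNReal.ofReal (D * C ^ (1 / p) + 1) * L := by
    rw [mul_right_comm, ← ENNReal.coe_rpow_of_nonneg _ (by positivity), ← ENNReal.coe_mul,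
      ← ENNReal.ofReal_coe_nnreal, NNReal.coe_mul, NNReal.coe_rpow]
    gcongr
    exact le_add_of_nonneg_right zero_le_one
  refine (lintegral_tsum_sq_rpow_le_of_le_const_mul (c := D * L) (by finiteness)
    (fun i x => (hφ i).enorm_fderiv_commutator_le (hr i) hb (hf i).aestronglyMeasurable x)
    hp0).trans ?_
  calc _ ≤ (D * L : ℝ≥0∞) * (C * ∫⁻ x, (∑' i, ‖f i x‖ₑ ^ 2) ^ (p / 2) ∂μ) ^ (1 / p) := by
        gcongr
        exact hC _ fun i => (hf i).enorm
    _ = D * L * (C : ℝ≥0∞) ^ (1 / p) * (∫⁻ x, (∑' i, ‖f i x‖ₑ ^ 2) ^ (p / 2) ∂μ) ^ (1 / p) := by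
        rw [ENNReal.mul_rpow_of_nonneg _ _ (by positivity), mul_assoc (D * L : ℝ≥0∞)]
    _ ≤ _ := by gcongr

theorem enorm_gradient {F : Type*} [NormedAddCommGroup F] [InnerProductSpace ℝ F] [CompleteSpace F]
    (g : F → ℝ) (x : F) : ‖gradient g x‖ₑ = ‖fderiv ℝ g x‖ₑ := by
  rw [gradient, LinearIsometryEquiv.enorm_map]

theorem ofReal_sq_eq_enorm_sq (a : ℝ) : ENNReal.ofReal (a ^ 2) = ‖a‖ₑ ^ 2 := by
  rw [← sq_abs, ENNReal.ofReal_pow (abs_nonneg a), Real.enorm_eq_ofReal_abs]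

theorem schwartzConv_eq_dilatedConv (n : ℕ) (φ : SchwartzMap (EuclideanSpace ℝ (Fin n)) ℝ) (k : ℤ) :
    schwartzConv n φ k = dilatedConv volume φ (2 ^ k) := by
  funext g x
  simp only [schwartzConv, dilatedConv, finrank_euclideanSpace_fin, zpow_neg, zpow_mul,
    zpow_natCast]

theorem stmt17 (n : ℕ) (hn : 1 ≤ n) (p : ℝ) (hp : 1 < p)
    (φ : SchwartzMap (EuclideanSpace ℝ (Fin n)) ℝ) :
    ∃ C : ℝ, 0 < C ∧
      ∀ (b : EuclideanSpace ℝ (Fin n) → ℝ) (L : ℝ≥0), LipschitzWith L b →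
      ∀ f : ℤ → EuclideanSpace ℝ (Fin n) → ℝ, (∀ k, Measurable (f k)) →
      (∫⁻ x, (∑' k : ℤ, ENNReal.ofReal
            (‖gradient (fun z => b z * schwartzConv n φ k (f k) z -
                schwartzConv n φ k (fun y => b y * f k y) z) x‖ ^ 2)) ^ (p / 2))
          ^ (1 / p)
        ≤ ENNReal.ofReal C * (L : ℝ≥0∞) *
            (∫⁻ x, (∑' k : ℤ, ENNReal.ofReal ((f k x) ^ 2)) ^ (p / 2)) ^ (1 / p) := by
  obtain ⟨c, hφ⟩ := exists_hasPolynomialDecay φ _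
  simpa only [ofReal_sq_eq_enorm_sq, enorm_norm, enorm_gradient, schwartzConv_eq_dilatedConv] using
    stmt17_general (μ := volume) (fun _ => hφ) (fun k => zpow_pos two_pos k) hp
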